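/- For all 1 ≤ k ≤ n and every x ∈ U ∩ S^n, D_{e_k(x)} e_k(x) = −(1/s_{k−1}(x)) Σ_{r=k−1}^n x_r ∂_r. -/

import Mathlib

open scoped InnerProductSpace BigOperators

noncomputable section

/-- `s_j(x) = ∑_{r=j}^n x_r²`. -/
def sfun (n j : ℕ) (x : EuclideanSpace ℝ (Fin (n + 1))) : ℝ :=
  ∑ r : Fin (n + 1), if j ≤ (r : ℕ) then x r ^ 2 else 0

/-- The `j`-th coordinate of `x` (read as a natural-number index, `0` out of range). -/
def coordfun (n : ℕ) (x : EuclideanSpace ℝ (Fin (n + 1))) (j : ℕ) : ℝ :=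
  if h : j < n + 1 then x ⟨j, h⟩ else 0

/-- The vector field `e_j(x) = √(s_j/s_{j-1}) ( −∂_{j−1} + (x_{j−1}/s_j) Σ_{r=j}^n x_r ∂_r )`. -/
def efun (n j : ℕ) (x : EuclideanSpace ℝ (Fin (n + 1))) : EuclideanSpace ℝ (Fin (n + 1)) :=
  WithLp.toLp 2 fun r : Fin (n + 1) => Real.sqrt (sfun n j x / sfun n (j - 1) x) *
    (-(if (r : ℕ) = j - 1 then 1 else 0)
      + coordfun n x (j - 1) / sfun n j x * (if j ≤ (r : ℕ) then x r else 0))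

/-- `U = {x ∈ ℝ^{n+1} : x_n > 0}`. -/
def Usph (n : ℕ) : Set (EuclideanSpace ℝ (Fin (n + 1))) := {x | 0 < coordfun n x n}

/-- The unit sphere `S^n ⊂ ℝ^{n+1}`. -/
def sph (n : ℕ) : Set (EuclideanSpace ℝ (Fin (n + 1))) :=
  {x | ∑ r : Fin (n + 1), x r ^ 2 = 1}

lemma hasDerivAt_apply_add_smul {n : ℕ} (x v : EuclideanSpace ℝ (Fin n)) (i : Fin n) :
    HasDerivAt (fun t : ℝ => (x + t • v) i) (v i) 0 := by
  simpa using ((hasDerivAt_id (0 : ℝ)).mul_const (v i)).const_add (x i)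

/-- The derivative of `s_j` along the line through `x` with direction `v`. -/
lemma hasLineDerivAt_sfun (n j : ℕ) (x v : EuclideanSpace ℝ (Fin (n + 1))) :
    HasLineDerivAt ℝ (sfun n j)
      (∑ r : Fin (n + 1), if j ≤ (r : ℕ) then 2 * x r * v r else 0) x v := by
  unfold HasLineDerivAt sfun
  refine HasDerivAt.fun_sum fun r _ => ?_
  split_ifs
  · exact ((hasDerivAt_apply_add_smul x v r).fun_pow 2).congr_deriv (by simp)
  · exact hasDerivAt_const _ _

lemma differentiable_sfun (n j : ℕ) : Differentiable ℝ (sfun n j) := by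
  unfold sfun
  refine Differentiable.fun_sum fun r _ => ?_
  split_ifs <;> fun_prop

lemma sfun_pos {n j : ℕ} (hj : j ≤ n) {x : EuclideanSpace ℝ (Fin (n + 1))}
    (hx : x ∈ Usph n) : 0 < sfun n j x := by
  have hn : 0 < x (Fin.last n) := by simpa [Usph, coordfun, Fin.last] using hx
  refine Finset.sum_pos' (fun r _ => by split_ifs <;> positivity)
    ⟨Fin.last n, Finset.mem_univ _, ?_⟩
  rw [if_pos (by simpa using hj)]
  positivity

lemma sfun_eq_sq_add {n j : ℕ} (hj : j < n + 1) (x : EuclideanSpace ℝ (Fin (n + 1))) :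
    sfun n j x = x ⟨j, hj⟩ ^ 2 + sfun n (j + 1) x := by
  unfold sfun
  rw [← Finset.sum_ite_eq' Finset.univ (⟨j, hj⟩ : Fin (n + 1)) (fun r => x r ^ 2) |>.trans
    (if_pos (Finset.mem_univ _)), ← Finset.sum_add_distrib]
  refine Finset.sum_congr rfl fun r _ => ?_
  rcases lt_trichotomy (r : ℕ) j with h | h | h
  · simp [Fin.ext_iff, h.ne, h.not_ge, show ¬ j + 1 ≤ (r : ℕ) by omega]
  · simp [Fin.ext_iff, h]
  · simp [Fin.ext_iff, h.ne', h.le, show j + 1 ≤ (r : ℕ) by omega]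

lemma efun_succ_apply {n j : ℕ} (hj : j < n + 1) (x : EuclideanSpace ℝ (Fin (n + 1)))
    (r : Fin (n + 1)) :
    efun n (j + 1) x r = √(sfun n (j + 1) x / sfun n j x) *
      (-(if (r : ℕ) = j then 1 else 0)
        + x ⟨j, hj⟩ / sfun n (j + 1) x * (if j + 1 ≤ (r : ℕ) then x r else 0)) := by
  simp [efun, coordfun, hj]

lemma differentiableAt_efun_succ {n j : ℕ} (hj : j + 1 ≤ n)
    {x : EuclideanSpace ℝ (Fin (n + 1))} (hx : x ∈ Usph n) :
    DifferentiableAt ℝ (efun n (j + 1)) x := by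
  have hS := sfun_pos hj hx
  have hT := sfun_pos (j := j) (by omega) hx
  have dS := differentiable_sfun n (j + 1) x
  have dT := differentiable_sfun n j x
  rw [differentiableAt_euclidean]
  intro r
  simp only [efun_succ_apply (show j < n + 1 by omega)]
  simp only [div_eq_mul_inv]
  have dq := (dS.fun_mul (dT.fun_inv hT.ne')).sqrt (mul_pos hS (inv_pos.2 hT)).ne'
  refine dq.fun_mul (DifferentiableAt.const_add _ ?_)
  refine (DifferentiableAt.fun_mul (by fun_prop) (dS.fun_inv hS.ne')).fun_mul ?_
  split_ifs <;> fun_prop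

/-- The derivative of `s_{j+1}` along `e_{j+1}`. -/
lemma hasLineDerivAt_sfun_succ_efun {n j : ℕ} (hj : j + 1 ≤ n)
    {x : EuclideanSpace ℝ (Fin (n + 1))} (hx : x ∈ Usph n) :
    HasLineDerivAt ℝ (sfun n (j + 1))
      (2 * √(sfun n (j + 1) x / sfun n j x) * x ⟨j, by omega⟩) x (efun n (j + 1) x) := by
  have hS := sfun_pos hj hx
  convert hasLineDerivAt_sfun n (j + 1) x (efun n (j + 1) x) using 1
  set q := √(sfun n (j + 1) x / sfun n j x) with hq
  set a := x ⟨j, by omega⟩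
  trans 2 * q * (a / sfun n (j + 1) x) * sfun n (j + 1) x
  · field_simp
  · nth_rewrite 2 [sfun]
    rw [Finset.mul_sum]
    refine Finset.sum_congr rfl fun r _ => ?_
    split_ifs with h
    · rw [efun_succ_apply (show j < n + 1 by omega), if_neg (by omega), if_pos h]
      ring
    · simp

/-- `s_j` is stationary along `e_{j+1}`. -/
lemma hasLineDerivAt_sfun_efun {n j : ℕ} (hj : j + 1 ≤ n)
    {x : EuclideanSpace ℝ (Fin (n + 1))} (hx : x ∈ Usph n) :
    HasLineDerivAt ℝ (sfun n j) 0 x (efun n (j + 1) x) := by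
  have hj' : j < n + 1 := by omega
  have h := ((hasDerivAt_apply_add_smul x (efun n (j + 1) x) ⟨j, hj'⟩).fun_pow 2).fun_add
    (hasLineDerivAt_sfun_succ_efun hj hx)
  unfold HasLineDerivAt
  simp only [sfun_eq_sq_add hj']
  refine h.congr_deriv ?_
  rw [efun_succ_apply hj']
  simp
  ring

/-- The Leibniz computation behind `D_{e_k} e_k`, for one coordinate along a line: `S`, `T`, `a`, `L`
stand for `s_k`, `s_{k-1}`, `x_{k-1}` and the tail coordinate. -/
lemma hasDerivAt_frame_coordinate {S T a L : ℝ → ℝ} {c q L' : ℝ}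
    (hS : 0 < S 0) (hT : 0 < T 0) (hq : q = √(S 0 / T 0))
    (dS : HasDerivAt S (2 * q * a 0) 0) (dT : HasDerivAt T 0 0)
    (da : HasDerivAt a (-q) 0) (dL : HasDerivAt L L' 0) :
    HasDerivAt (fun t => √(S t / T t) * (c + a t / S t * L t))
      (a 0 / T 0 * (c + a 0 / S 0 * L 0) +
        q * ((-q * S 0 - a 0 * (2 * q * a 0)) / S 0 ^ 2 * L 0 + a 0 / S 0 * L')) 0 := by
  have hq0 : 0 < q := hq ▸ Real.sqrt_pos.2 (div_pos hS hT)
  have h := ((dS.fun_div dT hT.ne').sqrt (div_pos hS hT).ne').fun_mul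
    (((da.fun_div dS hS.ne').fun_mul dL).const_add c)
  rw [← hq] at h
  refine h.congr_deriv ?_
  field_simp
  ring

/-- For `1 ≤ k ≤ n` and `x ∈ U ∩ S^n`,
`D_{e_k(x)} e_k(x) = −(1/s_{k−1}(x)) Σ_{r=k−1}^n x_r ∂_r`. -/
theorem statement5 (n k : ℕ) (hk : 1 ≤ k) (hkn : k ≤ n)
    (x : EuclideanSpace ℝ (Fin (n + 1))) (hxU : x ∈ Usph n) (hxS : x ∈ sph n) :
    fderiv ℝ (efun n k) x (efun n k x)
      = (-(1 / sfun n (k - 1) x)) •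
          (WithLp.toLp 2 fun r : Fin (n + 1) => if k - 1 ≤ (r : ℕ) then x r else 0 :
            EuclideanSpace ℝ (Fin (n + 1))) := by
  obtain ⟨j, rfl⟩ : ∃ j, k = j + 1 := ⟨k - 1, by omega⟩
  have hj : j < n + 1 := by omega
  have hS := sfun_pos hkn hxU
  have hT := sfun_pos (j := j) (by omega) hxU
  simp only [Nat.add_sub_cancel]
  ext r
  set v := efun n (j + 1) x with hv
  set q := √(sfun n (j + 1) x / sfun n j x) with hq
  have hq2 : q ^ 2 = sfun n (j + 1) x / sfun n j x := Real.sq_sqrt (div_pos hS hT).le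
  have hD : HasDerivAt (fun t : ℝ => efun n (j + 1) (x + t • v) r)
      (fderiv ℝ (efun n (j + 1)) x v r) 0 :=
    (EuclideanSpace.proj (𝕜 := ℝ) r).hasFDerivAt.comp_hasDerivAt (0 : ℝ)
      ((differentiableAt_efun_succ hkn hxU).hasFDerivAt.hasLineDerivAt v)
  have hvj : v ⟨j, hj⟩ = -q := by
    rw [hv, efun_succ_apply hj]
    simp [hq]
  have hL : HasDerivAt (fun t : ℝ => if j + 1 ≤ (r : ℕ) then (x + t • v) r else 0)
      (if j + 1 ≤ (r : ℕ) then v r else 0) 0 := by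
    split_ifs
    · exact hasDerivAt_apply_add_smul x v r
    · exact hasDerivAt_const _ _
  simp only [efun_succ_apply hj] at hD
  rw [hD.unique (hasDerivAt_frame_coordinate (q := q) (by simpa using hS) (by simpa using hT)
    (by simp [hq])
    (by simpa [HasLineDerivAt] using hasLineDerivAt_sfun_succ_efun hkn hxU)
    (hasLineDerivAt_sfun_efun hkn hxU) (hvj ▸ hasDerivAt_apply_add_smul x v ⟨j, hj⟩) hL)]
  simp only [zero_smul, add_zero, PiLp.smul_apply, smul_eq_mul]
  rcases lt_trichotomy (r : ℕ) j with h | h | h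
  · simp [h.ne, h.not_ge, show ¬ j + 1 ≤ (r : ℕ) by omega]
  · obtain rfl : r = ⟨j, hj⟩ := Fin.ext h
    simp
    ring
  · have hvr : v r = q * (x ⟨j, hj⟩ / sfun n (j + 1) x * x r) := by
      rw [hv, efun_succ_apply hj, if_neg h.ne', if_pos (by omega)]
      simp [hq]
    rw [if_neg h.ne', if_pos (by omega), if_pos (by omega), if_pos (by omega), hvr]
    generalize sfun n (j + 1) x = S at *
    generalize sfun n j x = T at *
    generalize x ⟨j, hj⟩ = a at *
    trans a / T * (a / S * x r) + q ^ 2 * ((-S - 2 * a ^ 2) / S ^ 2 + a ^ 2 / S ^ 2) * x r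
    · field_simp
      ring
    · rw [hq2]
      field_simp
      ring
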